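/- With φ the map induced by the odd reflection at the odd simple root α_{i+1}, the Serre relations are preserved: φ((ad x^±_{β_j})^{1+|a'_{ij}|}(x^±_{β_i})) = 0; in particular, in ŝl(m|n,Π) one has [[x^±_{α_i,0},x^±_{α_{i+1},0}], [x^±_{α_i,0},x^±_{α_{i+1},0}]] = 0 (the image of [x^±_{β_i,0}, x^±_{β_i,0}] for the odd root β_i) and [x^∓_{α_{i+1},0}, x^∓_{α_{i+1},0}] = 0. -/

import Mathlib

/-!
Common framework for formalizing statements about affine super Yangians
`Y_ℏ(ŝl(m|n,Π))` attached to a simple root system `Π` of the affine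
Kac–Moody superalgebra `ŝl(m|n)` of type `A^{(1)}(m−1|n−1)`.
-/

noncomputable section

namespace ASY

open scoped TensorProduct

/-- The ground ring `ℂ[ℏ]`. -/
abbrev R : Type := Polynomial ℂ

/-- The formal deformation parameter `ℏ`. -/
def hbar : R := Polynomial.X

/-- `1/2` as an element of `ℂ[ℏ]`. -/
def half : R := Polynomial.C (1/2 : ℂ)

/-- The sign `(−1)^{p(a)p(b)}` attached to parities `pa`, `pb`. -/
def sg (pa pb : Bool) : R := if pa && pb then -1 else 1

section SuperOps

variable {Y : Type*} [Ring Y] [Algebra R Y]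

/-- The supercommutator `[a,b] = ab − (−1)^{p(a)p(b)} ba` of homogeneous elements of
parities `pa` and `pb`. -/
def sbr (pa pb : Bool) (x y : Y) : Y := x * y - sg pa pb • (y * x)

/-- The super anticommutator `{a,b} = ab + (−1)^{p(a)p(b)} ba`. -/
def sac (pa pb : Bool) (x y : Y) : Y := x * y + sg pa pb • (y * x)

/-- Iterated super-adjoint action `(ad x)^k y` for `x` of parity `pa` and `y` of parity `pb`. -/
def adN (pa pb : Bool) (x : Y) : ℕ → Y → Y
  | 0, y => y
  | k + 1, y => sbr pa (xor pb (pa && decide (k % 2 = 1))) x (adN pa pb x k y)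

/-- Iterated super-bracket `[x₁,[x₂,…,[x_k, y]…]]`, all `xᵢ` of parity `pa`, `y` of parity `pb`. -/
def adSeq (pa pb : Bool) : List Y → Y → Y
  | [], y => y
  | x :: l, y => sbr pa (xor pb (pa && decide (l.length % 2 = 1))) x (adSeq pa pb l y)

end SuperOps

/-- A simple root system `Π` of the affine Kac–Moody superalgebra `ŝl(m|n)`
(type `A^{(1)}(m−1|n−1)`): a cyclic arrangement of the `m + n` weights
`ε₁,…,ε_m, δ₁,…,δ_n`, recorded by the type of the weight at each position
(`false` = an `ε`-weight of norm `+1`, `true` = a `δ`-weight of norm `−1`);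
the simple roots are `α_i = e_i − e_{i+1}` (indices mod `m+n`). -/
structure SimpleRootSystem (m n : ℕ) : Type where
  /-- the type of the weight at each position -/
  τ : Fin (m + n) → Bool
  /-- there are exactly `n` weights of `δ`-type -/
  card_delta : (Finset.univ.filter fun k => τ k = true).card = n

namespace SimpleRootSystem

variable {m n : ℕ}

/-- The norm `(e_k, e_k) = ±1` of the `k`-th weight. -/
def w (P : SimpleRootSystem m n) (k : Fin (m + n)) : ℤ := if P.τ k then -1 else 1

variable [NeZero (m + n)]

/-- The coefficient of `e_k` in the simple root `α_i = e_i − e_{i+1}`. -/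
def coeffα (i k : Fin (m + n)) : ℤ := (if k = i then 1 else 0) - (if k = i + 1 then 1 else 0)

/-- The (symmetric) Cartan matrix `a_{ij} = (α_i, α_j)` of `Π`. -/
def a (P : SimpleRootSystem m n) (i j : Fin (m + n)) : ℤ :=
  ∑ k, P.w k * coeffα i k * coeffα j k

/-- The parity of the simple root `α_i` (`true` iff `α_i` is odd, iff `a_{ii} = 0`). -/
def par (P : SimpleRootSystem m n) (i : Fin (m + n)) : Bool := P.τ i != P.τ (i + 1)

/-- The reflection `s_{α_i}` on simple root systems: on the weight arrangement it
swaps the weights at positions `i` and `i+1`.  For `α_i` even it preserves `Π`;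
for `α_i` odd it is the odd reflection `Π ↦ Π₁`. -/
def reflect (P : SimpleRootSystem m n) (i : Fin (m + n)) : SimpleRootSystem m n where
  τ := P.τ ∘ Equiv.swap i (i + 1)
  card_delta := by
    have h1 : (Finset.univ.filter fun k => (P.τ ∘ Equiv.swap i (i + 1)) k = true).card
        = (Finset.univ.filter fun k => P.τ k = true).card :=
      Finset.card_equiv (Equiv.swap i (i + 1)) (fun k => by simp)
    rw [h1, P.card_delta]

/-- Applying a word of simple reflections to a simple root system. -/
def applyWord (P : SimpleRootSystem m n) : List (Fin (m + n)) → SimpleRootSystem m n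
  | [] => P
  | c :: l => applyWord (P.reflect c) l

/-- The word consists of even reflections at every stage (i.e. it represents an
element of the Weyl group, generated by even reflections). -/
def IsEvenWord (P : SimpleRootSystem m n) : List (Fin (m + n)) → Prop
  | [] => True
  | c :: l => P.par c = false ∧ IsEvenWord (P.reflect c) l

end SimpleRootSystem

end ASY

namespace ASY

/-- Chevalley generators `x^±_i`, `h_i` of the affine Kac–Moody superalgebra `ŝl(m|n,Π)`. -/
inductive KGen (N : ℕ) : Type
  | xp (i : Fin N)
  | xm (i : Fin N)
  | h (i : Fin N)

/-- The free algebra on the Chevalley generators. -/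
abbrev KFree (m n : ℕ) : Type := FreeAlgebra R (KGen (m + n))

section KMDefs

variable {m n : ℕ}

/-- `x^+_i` in the free algebra. -/
def KXp (i : Fin (m + n)) : KFree m n := FreeAlgebra.ι R (KGen.xp i)

/-- `x^−_i` in the free algebra. -/
def KXm (i : Fin (m + n)) : KFree m n := FreeAlgebra.ι R (KGen.xm i)

/-- `h_i` in the free algebra. -/
def KH (i : Fin (m + n)) : KFree m n := FreeAlgebra.ι R (KGen.h i)

variable [NeZero (m + n)]

/-- The defining relations of (the universal enveloping superalgebra of) the affine
Kac–Moody superalgebra `ŝl(m|n,Π)` with Chevalley generators `x^±_i`, `h_i`. -/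
inductive KRel (P : SimpleRootSystem m n) : KFree m n → KFree m n → Prop
  /-- `[h_i, h_j] = 0` -/
  | hh (i j : Fin (m + n)) : KRel P (sbr false false (KH i) (KH j)) 0
  /-- `[h_i, x^+_j] = a_{ij} x^+_j` -/
  | hxp (i j : Fin (m + n)) :
      KRel P (sbr false (P.par j) (KH i) (KXp j)) (((P.a i j : ℤ) : R) • KXp j)
  /-- `[h_i, x^−_j] = −a_{ij} x^−_j` -/
  | hxm (i j : Fin (m + n)) :
      KRel P (sbr false (P.par j) (KH i) (KXm j)) ((-(P.a i j : ℤ) : R) • KXm j)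
  /-- `[x^+_i, x^−_j] = δ_{ij} h_i` -/
  | pm (i j : Fin (m + n)) :
      KRel P (sbr (P.par i) (P.par j) (KXp i) (KXm j)) (if i = j then KH i else 0)
  /-- Serre relation `(ad x^+_i)^{1+|a_{ij}|}(x^+_j) = 0` for `i ≠ j` -/
  | serrep (i j : Fin (m + n)) (hij : i ≠ j) :
      KRel P (adN (P.par i) (P.par j) (KXp i) (1 + (P.a i j).natAbs) (KXp j)) 0
  /-- Serre relation `(ad x^−_i)^{1+|a_{ij}|}(x^−_j) = 0` for `i ≠ j` -/
  | serrem (i j : Fin (m + n)) (hij : i ≠ j) :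
      KRel P (adN (P.par i) (P.par j) (KXm i) (1 + (P.a i j).natAbs) (KXm j)) 0
  /-- `[x^+_t, x^+_t] = 0` for `α_t` odd -/
  | oddp (t : Fin (m + n)) (ht : P.par t = true) : KRel P (sbr true true (KXp t) (KXp t)) 0
  /-- `[x^−_t, x^−_t] = 0` for `α_t` odd -/
  | oddm (t : Fin (m + n)) (ht : P.par t = true) : KRel P (sbr true true (KXm t) (KXm t)) 0
  /-- `[[x^+_{t−1},x^+_t],[x^+_t,x^+_{t+1}]] = 0` for `α_t` odd -/
  | oddSp (t : Fin (m + n)) (ht : P.par t = true) :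
      KRel P (sbr (xor (P.par (t - 1)) true) (xor true (P.par (t + 1)))
        (sbr (P.par (t - 1)) true (KXp (t - 1)) (KXp t))
        (sbr true (P.par (t + 1)) (KXp t) (KXp (t + 1)))) 0
  /-- `[[x^−_{t−1},x^−_t],[x^−_t,x^−_{t+1}]] = 0` for `α_t` odd -/
  | oddSm (t : Fin (m + n)) (ht : P.par t = true) :
      KRel P (sbr (xor (P.par (t - 1)) true) (xor true (P.par (t + 1)))
        (sbr (P.par (t - 1)) true (KXm (t - 1)) (KXm t))
        (sbr true (P.par (t + 1)) (KXm t) (KXm (t + 1)))) 0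

/-- (The universal enveloping superalgebra of) the affine Kac–Moody superalgebra
`ŝl(m|n,Π)`, presented by the Chevalley generators and relations. -/
abbrev KM (P : SimpleRootSystem m n) : Type := RingQuot (KRel P)

/-- Projection onto `ŝl(m|n,Π)`. -/
def mkK (P : SimpleRootSystem m n) : KFree m n →ₐ[R] KM P := RingQuot.mkAlgHom R (KRel P)

/-- Chevalley generator `x^+_i` of `ŝl(m|n,Π)`. -/
def kxp (P : SimpleRootSystem m n) (i : Fin (m + n)) : KM P := mkK P (KXp i)

/-- Chevalley generator `x^−_i` of `ŝl(m|n,Π)`. -/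
def kxm (P : SimpleRootSystem m n) (i : Fin (m + n)) : KM P := mkK P (KXm i)

/-- Chevalley generator `h_i` of `ŝl(m|n,Π)`. -/
def kh (P : SimpleRootSystem m n) (i : Fin (m + n)) : KM P := mkK P (KH i)

/-- The image under `φ` (the map induced by the odd reflection at the odd simple root `α_c`)
of the Cartan generator `h_{β_j}` of `ŝl(m|n,Π₁)` inside `ŝl(m|n,Π)`. -/
def phiH (P : SimpleRootSystem m n) (c j : Fin (m + n)) : KM P :=
  if j = c then -(kh P c)
  else if j = c - 1 then kh P (c - 1) + kh P c
  else if j = c + 1 then kh P (c + 1) + kh P c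
  else kh P j

/-- The image under `φ` of the generator `x^+_{β_j}` of `ŝl(m|n,Π₁)` inside `ŝl(m|n,Π)`. -/
def phiXp (P : SimpleRootSystem m n) (c j : Fin (m + n)) : KM P :=
  if j = c then kxm P c
  else if j = c - 1 then sbr (P.par (c - 1)) true (kxp P (c - 1)) (kxp P c)
  else if j = c + 1 then sbr (P.par (c + 1)) true (kxp P (c + 1)) (kxp P c)
  else kxp P j

/-- The image under `φ` of the generator `x^−_{β_j}` of `ŝl(m|n,Π₁)` inside `ŝl(m|n,Π)`. -/
def phiXm (P : SimpleRootSystem m n) (c j : Fin (m + n)) : KM P :=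
  if j = c then kxp P c
  else if j = c - 1 then -(sbr (P.par (c - 1)) true (kxm P (c - 1)) (kxm P c))
  else if j = c + 1 then -(sbr (P.par (c + 1)) true (kxm P (c + 1)) (kxm P c))
  else kxm P j

end KMDefs

end ASY

namespace ASY

/-!
Everything follows from the super Jacobi identity. Write `y_j = [x_j, x_c]` for the reflected
generator at a neighbour `j` of the odd node `c`. The quartic relation at `c` says exactly that the
`y_j` supercommute with one another; `[y_j, z]` is a multiple of `x_j` for the root vector `z` of
`-α_c`, so `[y_j, [y_j, z]] = 0` by the Serre relations between `x_j` and `x_c`. If `k ≠ c` is a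
further neighbour of `j`, then `[x_c, x_k] = 0` because the diagram has no triangle, and
`[y_j, [y_j, x_k]]` vanishes since `y_j` squares to zero when `α_j` is even, and by the quartic
relation at `j` when `α_j` is odd.
-/

section Supercommutator

variable {Y : Type*} [Ring Y] [Algebra R Y]

lemma sg_comm (p q : Bool) : sg p q = sg q p := by
  simp only [sg, Bool.and_comm]

lemma sg_mul_self (p q : Bool) : sg p q * sg p q = 1 := by
  unfold sg; split_ifs <;> norm_num

lemma isUnit_sg (p q : Bool) : IsUnit (sg p q) :=
  IsUnit.of_mul_eq_one _ (sg_mul_self p q)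

lemma sg_xor_right (p q r : Bool) : sg p (xor q r) = sg p q * sg p r := by
  cases p <;> cases q <;> cases r <;> simp [sg]

lemma sg_xor_left (p q r : Bool) : sg (xor p q) r = sg p r * sg q r := by
  simp only [sg_comm _ r, sg_xor_right]

lemma sbr_zero_right (p q : Bool) (x : Y) : sbr p q x 0 = 0 := by
  simp [sbr]

lemma sbr_zero_left (p q : Bool) (y : Y) : sbr p q 0 y = 0 := by
  simp [sbr]

lemma sbr_smul_left (p q : Bool) (r : R) (x y : Y) : sbr p q (r • x) y = r • sbr p q x y := by
  simp only [sbr, smul_mul_assoc, mul_smul_comm, smul_sub, smul_comm r]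

lemma sbr_smul_right (p q : Bool) (r : R) (x y : Y) : sbr p q x (r • y) = r • sbr p q x y := by
  simp only [sbr, smul_mul_assoc, mul_smul_comm, smul_sub, smul_comm r]

lemma sbr_skew (p q : Bool) (x y : Y) : sbr p q x y = -sg p q • sbr q p y x := by
  simp only [sbr, smul_sub, smul_smul, neg_mul, neg_smul, sg_comm q p, sg_mul_self, one_smul]
  abel

lemma sbr_eq_zero_comm {p q : Bool} {x y : Y} : sbr p q x y = 0 ↔ sbr q p y x = 0 := by
  rw [sbr_skew, (isUnit_sg p q).neg.smul_eq_zero]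

/-- The super Jacobi identity. -/
lemma leibniz_sbr (p q r : Bool) (x y z : Y) :
    sbr p (xor q r) x (sbr q r y z) =
      sbr (xor p q) r (sbr p q x y) z + sg p q • sbr q (xor p r) y (sbr p r x z) := by
  simp only [sbr, sg_xor_right, sg_xor_left, sg_comm q p, mul_sub, sub_mul, smul_sub, mul_smul_comm,
    smul_mul_assoc, smul_smul, mul_assoc]
  linear_combination (norm := module)
    sg_mul_self p q • (sg q r • (x * (z * y)) - (sg p r * sg q r) • (z * (x * y)))

lemma sbr_sbr_assoc_of_right {p q r : Bool} {x y z : Y} (hxz : sbr p r x z = 0) :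
    sbr p (xor q r) x (sbr q r y z) = sbr (xor p q) r (sbr p q x y) z := by
  rw [leibniz_sbr, hxz, sbr_zero_right, smul_zero, add_zero]

lemma sbr_sbr_eq_zero {p q r : Bool} {x y z : Y} (hxy : sbr p q x y = 0) (hxz : sbr p r x z = 0) :
    sbr p (xor q r) x (sbr q r y z) = 0 := by
  rw [sbr_sbr_assoc_of_right hxz, hxy, sbr_zero_left]

lemma sbr_sbr_reverse {p q r : Bool} {x y z : Y}
    (h : sbr (xor p q) (xor q r) (sbr p q x y) (sbr q r y z) = 0) :
    sbr (xor r q) (xor q p) (sbr r q z y) (sbr q p y x) = 0 := by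
  rw [sbr_skew r, sbr_skew q p, sbr_smul_left, sbr_smul_right, Bool.xor_comm r, Bool.xor_comm q p,
    sbr_eq_zero_comm.mp h, smul_zero, smul_zero]

lemma adN_one (p q : Bool) (x y : Y) : adN p q x 1 y = sbr p q x y := by
  simp [adN]

lemma adN_two (p q : Bool) (x y : Y) : adN p q x 2 y = sbr p (xor p q) x (sbr p q x y) := by
  simp [adN, Bool.xor_comm]

lemma adN_smul (p q : Bool) (r s : R) (x y : Y) (k : ℕ) :
    adN p q (r • x) k (s • y) = (r ^ k * s) • adN p q x k y := by
  induction k with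
  | zero => simp [adN]
  | succ k ih => simp only [adN, ih, sbr_smul_left, sbr_smul_right, smul_smul]; ring_nf

lemma adN_sbr_of_sbr_eq_zero {p q r : Bool} {x y z : Y} (hxz : sbr p r x z = 0) (k : ℕ) :
    adN p (xor q r) x k (sbr q r y z) =
      sbr (xor q (p && decide (k % 2 = 1))) r (adN p q x k y) z := by
  induction k with
  | zero => simp [adN]
  | succ k ih =>
    have parity : xor q (p && decide ((k + 1) % 2 = 1)) =
        xor p (xor q (p && decide (k % 2 = 1))) := by
      rcases Nat.mod_two_eq_zero_or_one k with hk | hk <;> cases p <;>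
        simp [hk, Nat.add_mod]
    rw [adN, ih, Bool.xor_right_comm, sbr_sbr_assoc_of_right hxz, parity, adN]

/-- Since `[x, [x, y]] = ½ [[x, x], y]` for odd `x`. -/
lemma adN_two_eq_zero_of_sbr_self {x : Y} (hx : sbr true true x x = 0) (q : Bool) (y : Y) :
    adN true q x 2 y = 0 := by
  have jacobi := leibniz_sbr true true q x x y
  rw [hx, sbr_zero_left, zero_add, ← adN_two] at jacobi
  have two_smul_eq_zero : (2 : R) • adN true q x 2 y = 0 := by
    rw [two_smul]
    nth_rewrite 1 [jacobi]
    simp [sg]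
  have isUnit_two : IsUnit (2 : R) := (IsUnit.mk0 (2 : ℂ) two_ne_zero).map Polynomial.C
  exact isUnit_two.smul_eq_zero.mp two_smul_eq_zero

lemma sbr_left_sbr_eq_zero {p q : Bool} {x y : Y} (h : adN p q x 2 y = 0) :
    sbr (xor p q) p (sbr p q x y) x = 0 := by
  rwa [sbr_eq_zero_comm, ← adN_two]

lemma sbr_right_sbr_eq_zero {p q : Bool} {x y : Y} (h : adN q p y 2 x = 0) :
    sbr (xor p q) q (sbr p q x y) y = 0 := by
  rw [sbr_eq_zero_comm, sbr_skew p q x y, sbr_smul_right, Bool.xor_comm, ← adN_two, h, smul_zero]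

lemma adN_two_sbr_eq_zero_of_smul {p q : Bool} {x y z : Y} {s : R} (h : adN p q x 2 y = 0)
    (hz : sbr (xor p q) q (sbr p q x y) z = s • x) :
    adN (xor p q) q (sbr p q x y) 2 z = 0 := by
  have parity : xor (xor p q) q = p := by simp
  rw [adN_two, hz, sbr_smul_right, parity, sbr_left_sbr_eq_zero h, smul_zero]

lemma adN_two_sbr_eq_zero_of_quartic {p q r : Bool} {u x y : Y} (hyu : sbr q r y u = 0)
    (h : adN q p y 2 x = 0)
    (quartic : sbr (xor r p) (xor p q) (sbr r p u x) (sbr p q x y) = 0) :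
    adN (xor p q) r (sbr p q x y) 2 u = 0 := by
  have bracket_eq : sbr (xor p q) r (sbr p q x y) u =
      -sg (xor p q) r • sbr (xor r p) q (sbr r p u x) y := by
    rw [sbr_skew, sbr_sbr_assoc_of_right (sbr_eq_zero_comm.mp hyu)]
  have comm : sbr (xor p q) (xor (xor r p) q) (sbr p q x y) (sbr (xor r p) q (sbr r p u x) y) = 0 :=
    sbr_sbr_eq_zero (sbr_eq_zero_comm.mp quartic) (sbr_right_sbr_eq_zero h)
  rw [adN_two, bracket_eq, sbr_smul_right, Bool.xor_comm (xor p q) r, ← Bool.xor_assoc, comm,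
    smul_zero]

lemma sbr_self_sbr_eq_zero {p q : Bool} {x y : Y} (hxy : adN p q x 2 y = 0)
    (hyx : adN q p y 2 x = 0) :
    sbr (xor p q) (xor p q) (sbr p q x y) (sbr p q x y) = 0 :=
  sbr_sbr_eq_zero (sbr_left_sbr_eq_zero hxy) (sbr_right_sbr_eq_zero hyx)

end Supercommutator

/-! ### The odd reflection over a triangle-free Dynkin diagram -/

section OddReflection

variable {Y : Type*} [Ring Y] [Algebra R Y]

variable {I : Type*} {G : SimpleGraph I} {p : I → Bool} {X : I → Y} {c : I} {Z : Y}

/-- The Serre relations satisfied by the positive (or the negative) Chevalley generators `X` of a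
Kac–Moody superalgebra with simply laced Dynkin diagram `G` and parities `p`, including the quartic
relation at the odd nodes. -/
structure IsSerreSystem (G : SimpleGraph I) (p : I → Bool) (X : I → Y) : Prop where
  sbr_eq_zero : ∀ ⦃i j⦄, i ≠ j → ¬ G.Adj i j → sbr (p i) (p j) (X i) (X j) = 0
  adN_two_eq_zero : ∀ ⦃i j⦄, G.Adj i j → adN (p i) (p j) (X i) 2 (X j) = 0
  quartic : ∀ ⦃t⦄, p t = true → ∀ ⦃i j⦄, G.Adj i t → G.Adj j t → i ≠ j →
    sbr (xor (p i) (p t)) (xor (p t) (p j))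
      (sbr (p i) (p t) (X i) (X t)) (sbr (p t) (p j) (X t) (X j)) = 0

/-- `Z` behaves like a root vector for `-α_c` relative to the simple root vectors `X`. -/
structure IsOppositeRootVector (G : SimpleGraph I) (p : I → Bool) (X : I → Y) (c : I) (Z : Y) :
    Prop where
  sbr_self : sbr (p c) (p c) Z Z = 0
  sbr_eq_zero : ∀ ⦃i⦄, i ≠ c → sbr (p i) (p c) (X i) Z = 0
  exists_smul : ∀ ⦃i⦄, G.Adj i c →
    ∃ s : R, sbr false (p i) (sbr (p c) (p c) (X c) Z) (X i) = s • X i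

namespace IsSerreSystem

lemma sbr_self_sbr (S : IsSerreSystem G p X) {i j : I} (hij : G.Adj i j) :
    sbr (xor (p i) (p j)) (xor (p i) (p j)) (sbr (p i) (p j) (X i) (X j))
      (sbr (p i) (p j) (X i) (X j)) = 0 :=
  sbr_self_sbr_eq_zero (S.adN_two_eq_zero hij) (S.adN_two_eq_zero hij.symm)

lemma sbr_sbr_common (S : IsSerreSystem G p X) {i j t : I} (ht : p t = true) (hi : G.Adj i t)
    (hj : G.Adj j t) (hij : i ≠ j) :
    sbr (xor (p i) (p t)) (xor (p j) (p t)) (sbr (p i) (p t) (X i) (X t))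
      (sbr (p j) (p t) (X j) (X t)) = 0 := by
  rw [sbr_skew (p j), sbr_smul_right, Bool.xor_comm (p j), S.quartic ht hi hj hij, smul_zero]

lemma adN_two_sbr_outer (S : IsSerreSystem G p X) (hc : p c = true) {j k : I} (hj : G.Adj j c)
    (hjk : G.Adj j k) (hkc : k ≠ c) (hk : ¬ G.Adj k c) :
    adN (xor (p j) (p c)) (p k) (sbr (p j) (p c) (X j) (X c)) 2 (X k) = 0 := by
  cases hpj : p j
  · have square := S.sbr_self_sbr hj
    simp only [hpj, hc, Bool.false_xor] at square ⊢
    exact adN_two_eq_zero_of_sbr_self square _ _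
  · rw [← hpj]
    exact adN_two_sbr_eq_zero_of_quartic (S.sbr_eq_zero hkc.symm fun h => hk h.symm)
      (S.adN_two_eq_zero hj.symm) (S.quartic hpj hjk.symm hj.symm hkc)

end IsSerreSystem

lemma IsOppositeRootVector.exists_sbr_sbr_eq_smul (hZ : IsOppositeRootVector G p X c Z)
    {j : I} (hj : G.Adj j c) :
    ∃ s : R, sbr (xor (p j) (p c)) (p c) (sbr (p j) (p c) (X j) (X c)) Z = s • X j := by
  obtain ⟨s, hs⟩ := hZ.exists_smul hj
  refine ⟨-sg (p j) false * s, ?_⟩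
  rw [← sbr_sbr_assoc_of_right (hZ.sbr_eq_zero hj.ne), Bool.xor_self, sbr_skew, hs, smul_smul]

variable [DecidableRel G.Adj]

/-- The parities of the simple roots after the odd reflection at `c`. -/
def reflPar (G : SimpleGraph I) [DecidableRel G.Adj] (p : I → Bool) (c j : I) : Bool :=
  if G.Adj j c then xor (p j) (p c) else p j

lemma reflPar_of_adj {j : I} (hj : G.Adj j c) : reflPar G p c j = xor (p j) (p c) := if_pos hj

lemma reflPar_of_not_adj {j : I} (hj : ¬ G.Adj j c) : reflPar G p c j = p j := if_neg hj

lemma reflPar_self : reflPar G p c c = p c := reflPar_of_not_adj G.irrefl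

variable [DecidableEq I]

/-- The simple root vectors after the odd reflection at `c`, up to sign; `Z` is the root vector for
`-α_c`. -/
def reflGen (G : SimpleGraph I) [DecidableRel G.Adj] (p : I → Bool) (X : I → Y) (c : I) (Z : Y)
    (j : I) : Y :=
  if j = c then Z else if G.Adj j c then sbr (p j) (p c) (X j) (X c) else X j

lemma reflGen_self : reflGen G p X c Z c = Z := if_pos rfl

lemma reflGen_of_adj {j : I} (hj : G.Adj j c) :
    reflGen G p X c Z j = sbr (p j) (p c) (X j) (X c) := by
  rw [reflGen, if_neg hj.ne, if_pos hj]

lemma reflGen_of_not_adj {j : I} (hjc : j ≠ c) (hj : ¬ G.Adj j c) : reflGen G p X c Z j = X j := by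
  rw [reflGen, if_neg hjc, if_neg hj]

namespace IsSerreSystem

/-- For two neighbours of `c` this is the quartic relation at `c`. -/
lemma sbr_reflGen (S : IsSerreSystem G p X) (hc : p c = true) (hZ : IsOppositeRootVector G p X c Z)
    {j k : I} (hjk : j ≠ k) (hadj : ¬ G.Adj j k) :
    sbr (reflPar G p c j) (reflPar G p c k) (reflGen G p X c Z j) (reflGen G p X c Z k) = 0 := by
  rcases eq_or_ne j c with rfl | hjc
  · have hk : ¬ G.Adj k j := fun h => hadj h.symm
    rw [reflGen_self, reflPar_self, reflGen_of_not_adj hjk.symm hk, reflPar_of_not_adj hk]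
    exact sbr_eq_zero_comm.mp (hZ.sbr_eq_zero hjk.symm)
  rcases eq_or_ne k c with rfl | hkc
  · rw [reflGen_self, reflPar_self, reflGen_of_not_adj hjk hadj, reflPar_of_not_adj hadj]
    exact hZ.sbr_eq_zero hjk
  by_cases hj : G.Adj j c <;> by_cases hk : G.Adj k c
  · rw [reflGen_of_adj hj, reflGen_of_adj hk, reflPar_of_adj hj, reflPar_of_adj hk]
    exact S.sbr_sbr_common hc hj hk hjk
  · rw [reflGen_of_adj hj, reflGen_of_not_adj hkc hk, reflPar_of_adj hj, reflPar_of_not_adj hk,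
      sbr_eq_zero_comm]
    exact sbr_sbr_eq_zero (S.sbr_eq_zero hjk.symm fun h => hadj h.symm) (S.sbr_eq_zero hkc hk)
  · rw [reflGen_of_not_adj hjc hj, reflGen_of_adj hk, reflPar_of_not_adj hj, reflPar_of_adj hk]
    exact sbr_sbr_eq_zero (S.sbr_eq_zero hjk hadj) (S.sbr_eq_zero hjc hj)
  · rw [reflGen_of_not_adj hjc hj, reflGen_of_not_adj hkc hk, reflPar_of_not_adj hj,
      reflPar_of_not_adj hk]
    exact S.sbr_eq_zero hjk hadj

lemma adN_two_reflGen (S : IsSerreSystem G p X) (hG : G.CliqueFree 3) (hc : p c = true)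
    (hZ : IsOppositeRootVector G p X c Z) {j k : I} (hjk : G.Adj j k) :
    adN (reflPar G p c j) (reflPar G p c k) (reflGen G p X c Z j) 2 (reflGen G p X c Z k) = 0 := by
  rcases eq_or_ne j c with rfl | hjc
  · rw [reflGen_self, reflPar_self, hc]
    exact adN_two_eq_zero_of_sbr_self (by simpa only [hc] using hZ.sbr_self) _ _
  by_cases hj : G.Adj j c
  · rw [reflGen_of_adj hj, reflPar_of_adj hj]
    rcases eq_or_ne k c with rfl | hkc
    · obtain ⟨s, hs⟩ := hZ.exists_sbr_sbr_eq_smul hj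
      rw [reflGen_self, reflPar_self]
      exact adN_two_sbr_eq_zero_of_smul (S.adN_two_eq_zero hj) hs
    · have hk : ¬ G.Adj k c := fun hk =>
        G.isIndepSet_neighborSet_of_triangleFree hG j hjk hj hkc hk
      rw [reflGen_of_not_adj hkc hk, reflPar_of_not_adj hk]
      exact S.adN_two_sbr_outer hc hj hjk hkc hk
  · have hkc : k ≠ c := by rintro rfl; exact hj hjk
    rw [reflGen_of_not_adj hjc hj, reflPar_of_not_adj hj]
    by_cases hk : G.Adj k c
    · rw [reflGen_of_adj hk, reflPar_of_adj hk, adN_sbr_of_sbr_eq_zero (S.sbr_eq_zero hjc hj),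
        S.adN_two_eq_zero hjk, sbr_zero_left]
    · rw [reflGen_of_not_adj hkc hk, reflPar_of_not_adj hk]
      exact S.adN_two_eq_zero hjk

theorem adN_reflGen (S : IsSerreSystem G p X) (hG : G.CliqueFree 3) (hc : p c = true)
    (hZ : IsOppositeRootVector G p X c Z) {j k : I} (hjk : j ≠ k) :
    adN (reflPar G p c j) (reflPar G p c k) (reflGen G p X c Z j)
      (1 + if G.Adj j k then 1 else 0) (reflGen G p X c Z k) = 0 := by
  split_ifs with hadj
  · exact S.adN_two_reflGen hG hc hZ hadj
  · rw [add_zero, adN_one]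
    exact S.sbr_reflGen hc hZ hjk hadj

end IsSerreSystem

end OddReflection

/-! ### The affine Dynkin diagram -/

section DynkinDiagram

open SimpleGraph

lemma cycleGraph_adj_iff {N : ℕ} [NeZero N] (hN : 2 ≤ N) {i j : Fin N} :
    (cycleGraph N).Adj i j ↔ j = i + 1 ∨ i = j + 1 := by
  obtain ⟨N, rfl⟩ := Nat.exists_eq_add_of_le' hN
  rw [cycleGraph_adj, sub_eq_iff_eq_add', sub_eq_iff_eq_add', add_comm j, add_comm i, or_comm]

open scoped Fin.CommRing in
lemma natCast_ne_zero_of_lt {N k : ℕ} [NeZero N] (hk : k ≠ 0) (hkN : k < N) : (k : Fin N) ≠ 0 :=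
  fun h => hkN.not_ge (Nat.le_of_dvd (Nat.pos_of_ne_zero hk) (Fin.natCast_eq_zero.mp h))

open scoped Fin.CommRing in
lemma add_one_ne {N : ℕ} [NeZero N] (hN : 2 ≤ N) (i : Fin N) : i + 1 ≠ i := fun h =>
  natCast_ne_zero_of_lt one_ne_zero hN (by linear_combination h)

open scoped Fin.CommRing in
lemma add_two_ne {N : ℕ} [NeZero N] (hN : 3 ≤ N) (i : Fin N) : i + 1 + 1 ≠ i := fun h =>
  natCast_ne_zero_of_lt two_ne_zero hN (by linear_combination h)

open scoped Fin.CommRing in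
lemma cycleGraph_cliqueFree_three {N : ℕ} (hN : 4 ≤ N) : (cycleGraph N).CliqueFree 3 := by
  have : NeZero N := ⟨by omega⟩
  have one_ne : ((1 : ℕ) : Fin N) ≠ 0 := natCast_ne_zero_of_lt one_ne_zero (by omega)
  have three_ne : ((3 : ℕ) : Fin N) ≠ 0 := natCast_ne_zero_of_lt three_ne_zero hN
  intro s hs
  obtain ⟨i, j, k, hij, hik, hjk, -⟩ := is3Clique_iff.mp hs
  rw [cycleGraph_adj_iff (by omega)] at hij hik hjk
  rcases hij with hij | hij <;> rcases hik with hik | hik <;> rcases hjk with hjk | hjk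
  · exact one_ne (by linear_combination hik - hij - hjk)
  · exact one_ne (by linear_combination hij - hik - hjk)
  · exact three_ne (by linear_combination -hij - hik - hjk)
  · exact one_ne (by linear_combination hjk - hij - hik)
  · exact one_ne (by linear_combination hjk - hij - hik)
  · exact three_ne (by linear_combination -hij - hik - hjk)
  · exact one_ne (by linear_combination hij - hik - hjk)
  · exact one_ne (by linear_combination hik - hij - hjk)

lemma ite_pred_ite_succ {N : ℕ} [NeZero N] (hN : 2 ≤ N) {α : Type*} (f : Fin N → α) (c j : Fin N)
    (x : α) :
    (if j = c - 1 then f (c - 1) else if j = c + 1 then f (c + 1) else x) =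
      if (cycleGraph N).Adj j c then f j else x := by
  have pred_iff : c = j + 1 ↔ j = c - 1 := by rw [eq_sub_iff_add_eq, eq_comm]
  simp only [cycleGraph_adj_iff hN, pred_iff]
  grind

namespace SimpleRootSystem

variable {m n : ℕ}

lemma natAbs_w (P : SimpleRootSystem m n) (i : Fin (m + n)) : (P.w i).natAbs = 1 := by
  unfold w; split_ifs <;> rfl

variable [NeZero (m + n)]

lemma a_eq (P : SimpleRootSystem m n) (i j : Fin (m + n)) :
    P.a i j = P.w i * coeffα j i - P.w (i + 1) * coeffα j (i + 1) := by
  have summand (k : Fin (m + n)) : P.w k * coeffα i k * coeffα j k =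
      (if k = i then P.w k * coeffα j k else 0) -
        (if k = i + 1 then P.w k * coeffα j k else 0) := by
    unfold coeffα
    split_ifs <;> ring
  simp only [a, summand, Finset.sum_sub_distrib, Finset.sum_ite_eq', Finset.mem_univ, if_true]

lemma natAbs_a (hN : 3 ≤ m + n) (P : SimpleRootSystem m n) {i j : Fin (m + n)} (hij : i ≠ j) :
    (P.a i j).natAbs = if (cycleGraph (m + n)).Adj i j then 1 else 0 := by
  have one_ne := add_one_ne (by omega : 2 ≤ m + n)
  have two_ne := add_two_ne hN
  simp only [a_eq, cycleGraph_adj_iff (by omega : 2 ≤ m + n)]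
  by_cases hj : j = i + 1
  · subst hj
    simp [coeffα, (one_ne _).symm, (two_ne _).symm, natAbs_w]
  by_cases hi : i = j + 1
  · subst hi
    simp [coeffα, one_ne, two_ne, natAbs_w]
  · simp [coeffα, hj, hi, hij, Ne.symm hj]

lemma par_reflect (hN : 3 ≤ m + n) (P : SimpleRootSystem m n) {c : Fin (m + n)}
    (hc : P.par c = true) (j : Fin (m + n)) :
    (P.reflect c).par j = reflPar (cycleGraph (m + n)) P.par c j := by
  have one_ne := add_one_ne (by omega : 2 ≤ m + n)
  have two_ne := add_two_ne hN
  have τ_succ : P.τ (c + 1) = !P.τ c := by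
    revert hc; unfold par; cases P.τ c <;> cases P.τ (c + 1) <;> simp
  simp only [reflPar, cycleGraph_adj_iff (by omega : 2 ≤ m + n), reflect, par, Function.comp_apply]
  by_cases hjc : j = c
  · subst hjc
    simp [(one_ne _).symm, τ_succ]
  by_cases hcj : c = j + 1
  · subst hcj
    simp [Equiv.swap_apply_of_ne_of_ne (one_ne j).symm (two_ne j).symm, τ_succ]
  by_cases hjc' : j = c + 1
  · subst hjc'
    simp [Equiv.swap_apply_of_ne_of_ne (two_ne c) (one_ne _), τ_succ]
  · have hsucc : j + 1 ≠ c + 1 := fun h => hjc (add_right_cancel h)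
    simp [hcj, hjc', Equiv.swap_apply_of_ne_of_ne hjc hjc',
      Equiv.swap_apply_of_ne_of_ne (Ne.symm hcj) hsucc]

end SimpleRootSystem

end DynkinDiagram

/-! ### Chevalley generators of the affine superalgebra -/

section ChevalleyGenerators

open SimpleGraph SimpleRootSystem

variable {m n : ℕ} [NeZero (m + n)] (P : SimpleRootSystem m n)

lemma mkK_sbr (p q : Bool) (x y : KFree m n) :
    mkK P (sbr p q x y) = sbr p q (mkK P x) (mkK P y) := by
  simp [sbr]

lemma mkK_adN (p q : Bool) (x y : KFree m n) (k : ℕ) :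
    mkK P (adN p q x k y) = adN p q (mkK P x) k (mkK P y) := by
  induction k with
  | zero => rfl
  | succ k ih => simp only [adN, mkK_sbr, ih]

lemma mkK_rel {x y : KFree m n} (h : KRel P x y) : mkK P x = mkK P y :=
  RingQuot.mkAlgHom_rel R h

/-- The quartic relations are imposed in the cyclic order `t - 1, t, t + 1` only; skew symmetry
reverses it. -/
lemma isSerreSystem_mkK (hN : 3 ≤ m + n) {X : Fin (m + n) → KFree m n}
    (serre : ∀ i j, i ≠ j →
      KRel P (adN (P.par i) (P.par j) (X i) (1 + (P.a i j).natAbs) (X j)) 0)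
    (quartic : ∀ t, P.par t = true →
      KRel P (sbr (xor (P.par (t - 1)) true) (xor true (P.par (t + 1)))
        (sbr (P.par (t - 1)) true (X (t - 1)) (X t))
        (sbr true (P.par (t + 1)) (X t) (X (t + 1)))) 0) :
    IsSerreSystem (cycleGraph (m + n)) P.par fun i => mkK P (X i) := by
  have adN_eq_zero {i j : Fin (m + n)} (hij : i ≠ j) :
      adN (P.par i) (P.par j) (mkK P (X i)) (1 + if (cycleGraph (m + n)).Adj i j then 1 else 0)
        (mkK P (X j)) = 0 := by
    rw [← natAbs_a hN P hij, ← mkK_adN, mkK_rel P (serre i j hij), map_zero]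
  have quartic_eq_zero {t : Fin (m + n)} (ht : P.par t = true) :
      sbr (xor (P.par (t - 1)) (P.par t)) (xor (P.par t) (P.par (t + 1)))
        (sbr (P.par (t - 1)) (P.par t) (mkK P (X (t - 1))) (mkK P (X t)))
        (sbr (P.par t) (P.par (t + 1)) (mkK P (X t)) (mkK P (X (t + 1)))) = 0 := by
    rw [ht, ← mkK_sbr, ← mkK_sbr, ← mkK_sbr, mkK_rel P (quartic t ht), map_zero]
  refine ⟨fun i j hij hadj => ?_, fun i j hadj => ?_, fun t ht i j hi hj hij => ?_⟩
  · simpa only [if_neg hadj, add_zero, adN_one] using adN_eq_zero hij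
  · simpa only [if_pos hadj] using adN_eq_zero hadj.ne
  · rw [cycleGraph_adj_iff (by omega)] at hi hj
    rcases hi with hi | rfl <;> rcases hj with hj | rfl
    · exact absurd (add_right_cancel (hi.symm.trans hj)) hij
    · rw [eq_sub_of_add_eq hi.symm]
      exact quartic_eq_zero ht
    · rw [eq_sub_of_add_eq hj.symm]
      exact sbr_sbr_reverse (quartic_eq_zero ht)
    · exact absurd rfl hij

lemma isSerreSystem_kxp (hN : 3 ≤ m + n) :
    IsSerreSystem (cycleGraph (m + n)) P.par (kxp P) :=
  isSerreSystem_mkK P hN KRel.serrep KRel.oddSp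

lemma isSerreSystem_kxm (hN : 3 ≤ m + n) :
    IsSerreSystem (cycleGraph (m + n)) P.par (kxm P) :=
  isSerreSystem_mkK P hN KRel.serrem KRel.oddSm

lemma sbr_kxp_self {c : Fin (m + n)} (hc : P.par c = true) :
    sbr true true (kxp P c) (kxp P c) = 0 := by
  rw [kxp, ← mkK_sbr, mkK_rel P (KRel.oddp c hc), map_zero]

lemma sbr_kxm_self {c : Fin (m + n)} (hc : P.par c = true) :
    sbr true true (kxm P c) (kxm P c) = 0 := by
  rw [kxm, ← mkK_sbr, mkK_rel P (KRel.oddm c hc), map_zero]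

lemma sbr_kxp_kxm_self (i : Fin (m + n)) :
    sbr (P.par i) (P.par i) (kxp P i) (kxm P i) = kh P i := by
  rw [kxp, kxm, ← mkK_sbr, mkK_rel P (KRel.pm i i), if_pos rfl, kh]

lemma sbr_kxp_kxm_of_ne {i j : Fin (m + n)} (hij : i ≠ j) :
    sbr (P.par i) (P.par j) (kxp P i) (kxm P j) = 0 := by
  rw [kxp, kxm, ← mkK_sbr, mkK_rel P (KRel.pm i j), if_neg hij, map_zero]

lemma sbr_kh_kxp (i j : Fin (m + n)) :
    sbr false (P.par j) (kh P i) (kxp P j) = ((P.a i j : ℤ) : R) • kxp P j := by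
  rw [kh, kxp, ← mkK_sbr, mkK_rel P (KRel.hxp i j), map_smul]

lemma sbr_kh_kxm (i j : Fin (m + n)) :
    sbr false (P.par j) (kh P i) (kxm P j) = (-(P.a i j : ℤ) : R) • kxm P j := by
  rw [kh, kxm, ← mkK_sbr, mkK_rel P (KRel.hxm i j), map_smul]

lemma isOppositeRootVector_kxm {c : Fin (m + n)} (hc : P.par c = true) :
    IsOppositeRootVector (cycleGraph (m + n)) P.par (kxp P) c (kxm P c) where
  sbr_self := by rw [hc, sbr_kxm_self P hc]
  sbr_eq_zero _ hi := sbr_kxp_kxm_of_ne P hi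
  exists_smul i _ := ⟨_, by rw [sbr_kxp_kxm_self, sbr_kh_kxp]⟩

lemma isOppositeRootVector_kxp {c : Fin (m + n)} (hc : P.par c = true) :
    IsOppositeRootVector (cycleGraph (m + n)) P.par (kxm P) c (kxp P c) where
  sbr_self := by rw [hc, sbr_kxp_self P hc]
  sbr_eq_zero _ hi := sbr_eq_zero_comm.mp (sbr_kxp_kxm_of_ne P hi.symm)
  exists_smul i _ := ⟨_, by
    rw [sbr_skew (P.par c), sbr_kxp_kxm_self, sbr_smul_left, sbr_kh_kxm, smul_smul]⟩

lemma phiXp_eq (hN : 2 ≤ m + n) {c : Fin (m + n)} (hc : P.par c = true) (j : Fin (m + n)) :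
    phiXp P c j = reflGen (cycleGraph (m + n)) P.par (kxp P) c (kxm P c) j := by
  rw [phiXp, reflGen, hc, ← ite_pred_ite_succ hN fun i => sbr (P.par i) true (kxp P i) (kxp P c)]

lemma phiXm_eq (hN : 2 ≤ m + n) {c : Fin (m + n)} (hc : P.par c = true) (j : Fin (m + n)) :
    phiXm P c j = (if (cycleGraph (m + n)).Adj j c then -1 else 1 : R) •
      reflGen (cycleGraph (m + n)) P.par (kxm P) c (kxp P c) j := by
  have neg_eq (x : KM P) : -x = (-1 : R) • x := (neg_one_smul R x).symm
  rw [phiXm, ite_pred_ite_succ hN fun i => -sbr (P.par i) true (kxm P i) (kxm P c)]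
  rcases eq_or_ne j c with rfl | hjc
  · rw [reflGen_self, if_pos rfl, if_neg (SimpleGraph.irrefl _), one_smul]
  · rw [reflGen, if_neg hjc, if_neg hjc, hc, neg_eq]
    split_ifs
    exacts [rfl, (one_smul R _).symm]

end ChevalleyGenerators

theorem phi_serre_relations_general (m n : ℕ) [NeZero (m + n)] (hN : 4 ≤ m + n)
    (P : SimpleRootSystem m n) (c : Fin (m + n)) (hodd : P.par c = true) :
    (∀ j k : Fin (m + n), j ≠ k →
      adN ((P.reflect c).par j) ((P.reflect c).par k) (phiXp P c j)
        (1 + ((P.reflect c).a j k).natAbs) (phiXp P c k) = 0 ∧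
      adN ((P.reflect c).par j) ((P.reflect c).par k) (phiXm P c j)
        (1 + ((P.reflect c).a j k).natAbs) (phiXm P c k) = 0) ∧
    (let pp := xor (P.par (c - 1)) true
     let Bp := sbr (P.par (c - 1)) true (kxp P (c - 1)) (kxp P c)
     let Bm := sbr (P.par (c - 1)) true (kxm P (c - 1)) (kxm P c)
     sbr pp pp Bp Bp = 0 ∧ sbr pp pp Bm Bm = 0 ∧
     sbr true true (kxm P c) (kxm P c) = 0 ∧ sbr true true (kxp P c) (kxp P c) = 0) := by
  have two_le : 2 ≤ m + n := by omega
  have three_le : 3 ≤ m + n := by omega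
  have triangle_free := cycleGraph_cliqueFree_three hN
  have adj : (SimpleGraph.cycleGraph (m + n)).Adj (c - 1) c :=
    (cycleGraph_adj_iff two_le).mpr (Or.inl (sub_add_cancel c 1).symm)
  have serre_p := isSerreSystem_kxp P three_le
  have serre_m := isSerreSystem_kxm P three_le
  refine ⟨fun j k hjk => ?_, ?_, ?_, sbr_kxm_self P hodd, sbr_kxp_self P hodd⟩
  · rw [P.par_reflect three_le hodd, P.par_reflect three_le hodd,
      (P.reflect c).natAbs_a three_le hjk]
    constructor
    · rw [phiXp_eq P two_le hodd, phiXp_eq P two_le hodd]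
      exact serre_p.adN_reflGen triangle_free hodd (isOppositeRootVector_kxm P hodd) hjk
    · rw [phiXm_eq P two_le hodd, phiXm_eq P two_le hodd, adN_smul,
        serre_m.adN_reflGen triangle_free hodd (isOppositeRootVector_kxp P hodd) hjk, smul_zero]
  · simpa only [hodd] using serre_p.sbr_self_sbr adj
  · simpa only [hodd] using serre_m.sbr_self_sbr adj

/-- With `φ` the map induced by the odd reflection at the odd simple root
`α_c` (`c = i+1`), the Serre relations are preserved:
`φ((ad x^±_{β_j})^{1+|a'_{jk}|}(x^±_{β_k})) = 0`; in particular, in `ŝl(m|n,Π)` one has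
`[[x^±_{α_{c−1},0},x^±_{α_c,0}], [x^±_{α_{c−1},0},x^±_{α_c,0}]] = 0` (the image of
`[x^±_{β_{c−1},0}, x^±_{β_{c−1},0}]` for the odd root `β_{c−1}`) and
`[x^∓_{α_c,0}, x^∓_{α_c,0}] = 0`. -/
theorem phi_serre_relations (m n : ℕ) [NeZero (m + n)]
    (hm : 2 ≤ m) (hn : 2 ≤ n) (hmn : m ≠ n)
    (P : SimpleRootSystem m n) (c : Fin (m + n)) (hodd : P.par c = true) :
    (∀ j k : Fin (m + n), j ≠ k →
      adN ((P.reflect c).par j) ((P.reflect c).par k) (phiXp P c j)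
        (1 + ((P.reflect c).a j k).natAbs) (phiXp P c k) = 0 ∧
      adN ((P.reflect c).par j) ((P.reflect c).par k) (phiXm P c j)
        (1 + ((P.reflect c).a j k).natAbs) (phiXm P c k) = 0) ∧
    (let pp := xor (P.par (c - 1)) true
     let Bp := sbr (P.par (c - 1)) true (kxp P (c - 1)) (kxp P c)
     let Bm := sbr (P.par (c - 1)) true (kxm P (c - 1)) (kxm P c)
     sbr pp pp Bp Bp = 0 ∧ sbr pp pp Bm Bm = 0 ∧
     sbr true true (kxm P c) (kxm P c) = 0 ∧ sbr true true (kxp P c) (kxp P c) = 0) :=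
  phi_serre_relations_general m n (by omega) P c hodd

end ASY
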